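/- Let n ≥ 5, let f be a γ_R-function of the generalized Petersen graph P(n,2) with minimum cardinality of V₂, and let i be an integer. If r_f(V′(i,7)) ≤ 1/2, then: (1) r_f(V′(i,7)) ≥ 1/2; (2) V′(i,7) ∩ V₁ = {v_{i+3}}; and (3) either V′(i,7) ∩ V₂ = {u_{i+1}, u_{i+2}, v_{i+5}} and V′(i,7) ∩ V₀ = V′(i,7) \ {v_{i+3}, u_{i+1}, u_{i+2}, v_{i+5}}, or V′(i,7) ∩ V₂ = {u_{i+4}, u_{i+5}, v_{i+1}} and V′(i,7) ∩ V₀ = V′(i,7) \ {v_{i+3}, u_{i+4}, u_{i+5}, v_{i+1}} (indices modulo n). -/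

import Mathlib

/-!
Write `V₂` as a 0/1 function and let `d(w)` be its sum over the closed neighbourhood of `w`.

* Minimality of `f` makes `V₂` independent and forbids edges between `V₁` and `V₂`
  (`eq_zero_of_adj_two`): a vertex of weight 1 next to `V₂` could be lowered to 0, and if `x`, `y`
  in `V₂` were adjacent one could set `f(x) = 0` and give weight 1 to the remaining (at most two)
  undominated neighbours of `x`, which does not raise the weight but shrinks `V₂`.
* Hence `d = 1` on `V₂`, `d = 0` on `V₁` and `d ≥ 1` on `V₀`, so that `r_f(w) = |d(w) - 1| / 2` for
  every vertex (`gf_inl`, `gf_inr`). The assumption says that the total defect `∑ |d(w) - 1|` over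
  the block is at most 1: at most one vertex of the block fails to be dominated exactly once.
* Lifting `V₂` to a periodic pattern on the infinite strip with columns indexed by `ℤ` removes all
  wrap-around problems. Four consecutive columns without defect admit just two patterns
  (`Strip.four`), and neither extends to five columns (`Strip.five`). So a block of seven columns
  with total defect at most 1 has its defective vertex in one of the three middle columns.
  The columns next to the centre are excluded by propagating the two four-column patterns, and a
  defect in the centre leaves the two configurations of the theorem (`Strip.seven`).
* For `n = 5, 6` the block is the whole graph. Any five consecutive columns of the periodic lift
  contain a defect, which for `n = 6` contradicts a total of 1 by skipping the defective column;
  for `n = 5` the two four-column patterns force defect 2 in the fifth column.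
-/

/-- The generalized Petersen graph `P(n,k)`: vertices `Sum.inl i` are the outer
vertices `v_i` and `Sum.inr i` are the inner vertices `u_i` (indices in `ZMod n`);
edges are `v_i v_{i+1}`, `v_i u_i` and `u_i u_{i+k}`. -/
def petersen (n k : ℕ) : SimpleGraph (ZMod n ⊕ ZMod n) :=
  SimpleGraph.fromRel fun a b =>
    match a, b with
    | Sum.inl i, Sum.inl j => j = i + 1
    | Sum.inl i, Sum.inr j => j = i
    | Sum.inr i, Sum.inr j => j = i + (k : ZMod n)
    | _, _ => False

/-- `f` is a Roman domination function on `G`. -/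
def IsRDF {V : Type*} (G : SimpleGraph V) (f : V → ℕ) : Prop :=
  (∀ v, f v ≤ 2) ∧ ∀ v, f v = 0 → ∃ u, G.Adj v u ∧ f u = 2

/-- The weight of a function on the vertices. -/
noncomputable def weight {V : Type*} (f : V → ℕ) : ℕ := ∑ᶠ v, f v

/-- The Roman domination number of `G`. -/
noncomputable def romanDomNum {V : Type*} (G : SimpleGraph V) : ℕ :=
  sInf {w | ∃ f : V → ℕ, IsRDF G f ∧ weight f = w}

/-- `f` is a `γ_R`-function of `G`: an RDF of minimum weight. -/
def IsGammaRFun {V : Type*} (G : SimpleGraph V) (f : V → ℕ) : Prop :=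
  IsRDF G f ∧ weight f = romanDomNum G

/-- `S` is a dominating set of `G`. -/
def IsDomSet {V : Type*} (G : SimpleGraph V) (S : Set V) : Prop :=
  ∀ v, v ∈ S ∨ ∃ u ∈ S, G.Adj u v

/-- The domination number of `G`. -/
noncomputable def domNum {V : Type*} (G : SimpleGraph V) : ℕ :=
  sInf {k | ∃ S : Set V, IsDomSet G S ∧ S.ncard = k}

/-- The function `g_f` associated to an RDF `f` on `P(n,2)`. -/
noncomputable def gf (n : ℕ) (f : ZMod n ⊕ ZMod n → ℕ) (w : ZMod n ⊕ ZMod n) : ℚ :=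
  if f w = 2 then 1/2
  else if f w = 1 then 1
  else (1/2) * (((petersen n 2).neighborSet w) ∩ {u | f u = 2}).ncard

/-- `r_f(S) = Σ_{w ∈ S} (g_f(w) - 1/2)`. -/
noncomputable def rfSum (n : ℕ) (f : ZMod n ⊕ ZMod n → ℕ) (S : Set (ZMod n ⊕ ZMod n)) : ℚ :=
  ∑ᶠ w ∈ S, (gf n f w - 1/2)

/-- The block `V'(i,t) = {v_j, u_j : i ≤ j ≤ i+t-1}`, indices modulo `n`. -/
def Vblock (n : ℕ) (i : ℤ) (t : ℕ) : Set (ZMod n ⊕ ZMod n) :=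
  {w | ∃ j : ℤ, i ≤ j ∧ j ≤ i + t - 1 ∧
    (w = Sum.inl ((j : ℤ) : ZMod n) ∨ w = Sum.inr ((j : ℤ) : ZMod n))}

/-- `f` has minimum cardinality of `V₂` among `γ_R`-functions of `P(n,2)`. -/
def MinV2 (n : ℕ) (f : ZMod n ⊕ ZMod n → ℕ) : Prop :=
  ∀ f' : ZMod n ⊕ ZMod n → ℕ, IsGammaRFun (petersen n 2) f' →
    {v | f v = 2}.ncard ≤ {v | f' v = 2}.ncard

/-! ### Exact domination patterns on the infinite strip -/

/-- An independent set of the infinite analogue of `P(n,2)`, with outer vertices `v_j` and inner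
vertices `u_j` for `j : ℤ`, given by its 0/1 indicator functions `V` and `U` on the two rows. -/
structure Strip where
  /-- Indicator on the outer vertices. -/
  V : ℤ → ℤ
  /-- Indicator on the inner vertices. -/
  U : ℤ → ℤ
  hV : ∀ j, V j = 0 ∨ V j = 1
  hU : ∀ j, U j = 0 ∨ U j = 1
  hVV : ∀ j, V j + V (j + 1) ≤ 1
  hVU : ∀ j, V j + U j ≤ 1
  hUU : ∀ j, U j + U (j + 2) ≤ 1

namespace Strip

variable (C : Strip)

/-- Number of elements of the set in the closed neighbourhood of `v_j`. -/
def dV (j : ℤ) : ℤ := C.V j + C.V (j - 1) + C.V (j + 1) + C.U j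

/-- Number of elements of the set in the closed neighbourhood of `u_j`. -/
def dU (j : ℤ) : ℤ := C.U j + C.U (j - 2) + C.U (j + 2) + C.V j

/-- Deviation of column `j` from being dominated exactly once. -/
def defect (j : ℤ) : ℕ := (C.dV j - 1).natAbs + (C.dU j - 1).natAbs

theorem perfect (j : ℤ) (h : C.defect j = 0) :
    C.V j + C.V (j - 1) + C.V (j + 1) + C.U j = 1 ∧
    C.U j + C.U (j - 2) + C.U (j + 2) + C.V j = 1 := by
  unfold defect dV dU at h
  omega

/-- Defect 1 expressed by linear conditions only: exactly one of the two terms is nonzero. -/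
theorem defect_one (j : ℤ) (h : C.defect j = 1) :
    (C.dV j + C.dU j = 1 ∨ C.dV j + C.dU j = 3) ∧
    (C.dV j = C.dU j + 1 ∨ C.dU j = C.dV j + 1) := by
  unfold defect at h
  omega

/-- The linear inequalities valid at every column. -/
theorem facts (j : ℤ) :
    (0 ≤ C.V j ∧ C.V j ≤ 1 ∧ 0 ≤ C.U j ∧ C.U j ≤ 1) ∧
    C.V j + C.U j ≤ 1 ∧ C.V j + C.V (j + 1) ≤ 1 ∧ C.U j + C.U (j + 2) ≤ 1 := by
  refine ⟨?_, C.hVU j, C.hVV j, C.hUU j⟩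
  have := C.hV j
  have := C.hU j
  omega

/-- The two patterns on four consecutive columns where every vertex is dominated exactly once. -/
theorem four (j : ℤ) (h0 : C.defect j = 0) (h1 : C.defect (j + 1) = 0) (h2 : C.defect (j + 2) = 0)
    (h3 : C.defect (j + 3) = 0) :
    (C.V j = 0 ∧ C.V (j + 1) = 0 ∧ C.V (j + 2) = 0 ∧ C.V (j + 3) = 0 ∧
      C.U j = 0 ∧ C.U (j + 1) = 1 ∧ C.U (j + 2) = 1 ∧ C.U (j + 3) = 0) ∨
    (C.V j = 1 ∧ C.V (j + 1) = 0 ∧ C.V (j + 2) = 0 ∧ C.V (j + 3) = 1 ∧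
      C.U j = 0 ∧ C.U (j + 1) = 0 ∧ C.U (j + 2) = 0 ∧ C.U (j + 3) = 0) := by
  have a0 := C.perfect _ h0
  have a1 := C.perfect _ h1
  have a2 := C.perfect _ h2
  have a3 := C.perfect _ h3
  have f0 := C.facts (j + (-2))
  have f1 := C.facts (j + (-1))
  have f2 := C.facts (j + (0))
  have f3 := C.facts (j + (1))
  have f4 := C.facts (j + (2))
  have f5 := C.facts (j + (3))
  have f6 := C.facts (j + (4))
  have f7 := C.facts (j + (5))
  have v0 := C.hV (j + 0)
  have v1 := C.hV (j + 1)
  have v2 := C.hV (j + 2)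
  have v3 := C.hV (j + 3)
  clear h0 h1 h2 h3
  ring_nf at *
  rcases v0 with v0 | v0 <;>
  rcases v1 with v1 | v1 <;>
  rcases v2 with v2 | v2 <;>
  rcases v3 with v3 | v3 <;> omega

set_option maxHeartbeats 1000000 in
/-- The six patterns on three consecutive columns where every vertex is dominated exactly once. -/
theorem three (j : ℤ) (h0 : C.defect j = 0) (h1 : C.defect (j + 1) = 0)
    (h2 : C.defect (j + 2) = 0) :
    (C.V j = 0 ∧ C.V (j + 1) = 0 ∧ C.V (j + 2) = 1 ∧
      C.U j = 0 ∧ C.U (j + 1) = 0 ∧ C.U (j + 2) = 0) ∨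
    (C.V j = 0 ∧ C.V (j + 1) = 0 ∧ C.V (j + 2) = 0 ∧
      C.U j = 0 ∧ C.U (j + 1) = 1 ∧ C.U (j + 2) = 0) ∨
    (C.V j = 0 ∧ C.V (j + 1) = 0 ∧ C.V (j + 2) = 0 ∧
      C.U j = 0 ∧ C.U (j + 1) = 1 ∧ C.U (j + 2) = 1) ∨
    (C.V j = 0 ∧ C.V (j + 1) = 1 ∧ C.V (j + 2) = 0 ∧
      C.U j = 0 ∧ C.U (j + 1) = 0 ∧ C.U (j + 2) = 0) ∨
    (C.V j = 0 ∧ C.V (j + 1) = 0 ∧ C.V (j + 2) = 0 ∧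
      C.U j = 1 ∧ C.U (j + 1) = 1 ∧ C.U (j + 2) = 0) ∨
    (C.V j = 1 ∧ C.V (j + 1) = 0 ∧ C.V (j + 2) = 0 ∧
      C.U j = 0 ∧ C.U (j + 1) = 0 ∧ C.U (j + 2) = 0) := by
  have a0 := C.perfect _ h0
  have a1 := C.perfect _ h1
  have a2 := C.perfect _ h2
  have f0 := C.facts (j + (-2))
  have f1 := C.facts (j + (-1))
  have f2 := C.facts (j + (0))
  have f3 := C.facts (j + (1))
  have f4 := C.facts (j + (2))
  have f5 := C.facts (j + (3))
  have f6 := C.facts (j + (4))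
  have v0 := C.hV (j + 0)
  have v1 := C.hV (j + 1)
  have v2 := C.hV (j + 2)
  have u0 := C.hU (j + 0)
  have u1 := C.hU (j + 1)
  have u2 := C.hU (j + 2)
  clear h0 h1 h2
  ring_nf at *
  rcases v0 with v0 | v0 <;>
  rcases v1 with v1 | v1 <;>
  rcases v2 with v2 | v2 <;>
  rcases u0 with u0 | u0 <;>
  rcases u1 with u1 | u1 <;>
  rcases u2 with u2 | u2 <;> omega

/-- Five consecutive columns cannot all be dominated exactly once. -/
theorem five (j : ℤ) :
    0 < C.defect j + C.defect (j + 1) + C.defect (j + 2) + C.defect (j + 3) + C.defect (j + 4) := by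
  by_contra h
  simp only [not_lt, nonpos_iff_eq_zero, Nat.add_eq_zero_iff, and_assoc] at h
  obtain ⟨h0, h1, h2, h3, h4⟩ := h
  have A := C.four j h0 h1 h2 h3
  have B := C.four (j + 1) h1 (by convert h2 using 2; ring) (by convert h3 using 2; ring)
    (by convert h4 using 2; ring)
  have a1 := C.perfect _ h1
  have a2 := C.perfect _ h2
  have a3 := C.perfect _ h3
  clear h0 h1 h2 h3
  ring_nf at *
  omega

/-- A single defect cannot sit in the third of seven columns: both patterns on the last four columns
propagate to a defect of 2 there. -/
theorem not_two (j : ℤ) (h0 : C.defect j = 0) (h1 : C.defect (j + 1) = 0)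
    (h2 : C.defect (j + 2) = 1) (h3 : C.defect (j + 3) = 0) (h4 : C.defect (j + 4) = 0)
    (h5 : C.defect (j + 5) = 0)
    (h6 : C.defect (j + 6) = 0) :
    False := by
  have p0 := C.perfect _ h0
  have p1 := C.perfect _ h1
  have p3 := C.perfect _ h3
  have p4 := C.perfect _ h4
  have p5 := C.perfect _ h5
  have p6 := C.perfect _ h6
  have b := C.defect_one _ h2
  simp only [dV, dU] at b ⊢
  have q := C.four _ h3 (by convert h4 using 2; ring) (by convert h5 using 2; ring)
    (by convert h6 using 2; ring)
  have f0 := C.facts (j + (-2))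
  have f1 := C.facts (j + (-1))
  have f2 := C.facts (j + (0))
  have f3 := C.facts (j + (1))
  have f4 := C.facts (j + (2))
  have f5 := C.facts (j + (3))
  have f6 := C.facts (j + (4))
  have f7 := C.facts (j + (5))
  have f8 := C.facts (j + (6))
  have f9 := C.facts (j + (7))
  have f10 := C.facts (j + (8))
  clear h0 h1 h2 h3 h4 h5 h6
  ring_nf at *
  rcases q with q | q <;> omega

/-- Mirror image of `Strip.not_two`. -/
theorem not_four (j : ℤ) (h0 : C.defect j = 0) (h1 : C.defect (j + 1) = 0)
    (h2 : C.defect (j + 2) = 0) (h3 : C.defect (j + 3) = 0) (h4 : C.defect (j + 4) = 1)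
    (h5 : C.defect (j + 5) = 0)
    (h6 : C.defect (j + 6) = 0) :
    False := by
  have p0 := C.perfect _ h0
  have p1 := C.perfect _ h1
  have p2 := C.perfect _ h2
  have p3 := C.perfect _ h3
  have p5 := C.perfect _ h5
  have p6 := C.perfect _ h6
  have b := C.defect_one _ h4
  simp only [dV, dU] at b ⊢
  have q := C.four _ h0 h1 h2 h3
  have f0 := C.facts (j + (-2))
  have f1 := C.facts (j + (-1))
  have f2 := C.facts (j + (0))
  have f3 := C.facts (j + (1))
  have f4 := C.facts (j + (2))
  have f5 := C.facts (j + (3))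
  have f6 := C.facts (j + (4))
  have f7 := C.facts (j + (5))
  have f8 := C.facts (j + (6))
  have f9 := C.facts (j + (7))
  have f10 := C.facts (j + (8))
  clear h0 h1 h2 h3 h4 h5 h6
  ring_nf at *
  rcases q with q | q <;> omega

set_option maxHeartbeats 2000000 in
/-- A single defect in the central column: combine the patterns of the three columns on either
side. -/
theorem mid (j : ℤ) (h0 : C.defect j = 0) (h1 : C.defect (j + 1) = 0) (h2 : C.defect (j + 2) = 0)
    (h3 : C.defect (j + 3) = 1) (h4 : C.defect (j + 4) = 0) (h5 : C.defect (j + 5) = 0)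
    (h6 : C.defect (j + 6) = 0) :
    C.dV (j + 3) = 0 ∧
    ((C.V j = 0 ∧ C.V (j + 1) = 0 ∧ C.V (j + 2) = 0 ∧ C.V (j + 3) = 0 ∧ C.V (j + 4) = 0 ∧
      C.V (j + 5) = 1 ∧ C.V (j + 6) = 0 ∧
      C.U j = 0 ∧ C.U (j + 1) = 1 ∧ C.U (j + 2) = 1 ∧ C.U (j + 3) = 0 ∧ C.U (j + 4) = 0 ∧
      C.U (j + 5) = 0 ∧ C.U (j + 6) = 0) ∨
    (C.V j = 0 ∧ C.V (j + 1) = 1 ∧ C.V (j + 2) = 0 ∧ C.V (j + 3) = 0 ∧ C.V (j + 4) = 0 ∧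
      C.V (j + 5) = 0 ∧ C.V (j + 6) = 0 ∧
      C.U j = 0 ∧ C.U (j + 1) = 0 ∧ C.U (j + 2) = 0 ∧ C.U (j + 3) = 0 ∧ C.U (j + 4) = 1 ∧
      C.U (j + 5) = 1 ∧ C.U (j + 6) = 0)) := by
  have p0 := C.perfect _ h0
  have p1 := C.perfect _ h1
  have p2 := C.perfect _ h2
  have p4 := C.perfect _ h4
  have p5 := C.perfect _ h5
  have p6 := C.perfect _ h6
  have b := C.defect_one _ h3
  simp only [dV, dU] at b ⊢
  have q := C.three _ h0 h1 h2
  have r := C.three _ h4 (by convert h5 using 2; ring) (by convert h6 using 2; ring)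
  have f0 := C.facts (j + (-2))
  have f1 := C.facts (j + (-1))
  have f2 := C.facts (j + (0))
  have f3 := C.facts (j + (1))
  have f4 := C.facts (j + (2))
  have f5 := C.facts (j + (3))
  have f6 := C.facts (j + (4))
  have f7 := C.facts (j + (5))
  have f8 := C.facts (j + (6))
  have f9 := C.facts (j + (7))
  have f10 := C.facts (j + (8))
  clear h0 h1 h2 h3 h4 h5 h6
  ring_nf at *
  rcases q with q | q | q | q | q | q <;>
  rcases r with r | r | r | r | r | r <;> omega

/-- Seven consecutive columns of total defect at most 1. -/
theorem seven (j : ℤ) (h : C.defect j + C.defect (j + 1) + C.defect (j + 2) + C.defect (j + 3) +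
      C.defect (j + 4) + C.defect (j + 5) + C.defect (j + 6) ≤ 1) :
    (C.defect j = 0 ∧ C.defect (j + 1) = 0 ∧ C.defect (j + 2) = 0 ∧ C.defect (j + 3) = 1 ∧
      C.defect (j + 4) = 0 ∧ C.defect (j + 5) = 0 ∧ C.defect (j + 6) = 0) ∧
    C.dV (j + 3) = 0 ∧
    ((C.V j = 0 ∧ C.V (j + 1) = 0 ∧ C.V (j + 2) = 0 ∧ C.V (j + 3) = 0 ∧ C.V (j + 4) = 0 ∧
      C.V (j + 5) = 1 ∧ C.V (j + 6) = 0 ∧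
      C.U j = 0 ∧ C.U (j + 1) = 1 ∧ C.U (j + 2) = 1 ∧ C.U (j + 3) = 0 ∧ C.U (j + 4) = 0 ∧
      C.U (j + 5) = 0 ∧ C.U (j + 6) = 0) ∨
    (C.V j = 0 ∧ C.V (j + 1) = 1 ∧ C.V (j + 2) = 0 ∧ C.V (j + 3) = 0 ∧ C.V (j + 4) = 0 ∧
      C.V (j + 5) = 0 ∧ C.V (j + 6) = 0 ∧
      C.U j = 0 ∧ C.U (j + 1) = 0 ∧ C.U (j + 2) = 0 ∧ C.U (j + 3) = 0 ∧ C.U (j + 4) = 1 ∧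
      C.U (j + 5) = 1 ∧ C.U (j + 6) = 0)) := by
  -- a defective column lies in each of the windows `0..4`, `1..5` and `2..6`
  have w0 := C.five j
  have w1 := C.five (j + 1)
  have w2 := C.five (j + 2)
  simp only [add_assoc, Int.reduceAdd] at w1 w2
  have key : C.defect (j + 2) = 1 ∨ C.defect (j + 3) = 1 ∨ C.defect (j + 4) = 1 := by omega
  rcases key with key | key | key
  · exact (C.not_two j (by omega) (by omega) key (by omega) (by omega) (by omega) (by omega)).elim
  · exact ⟨by omega, C.mid j (by omega) (by omega) (by omega) key (by omega) (by omega) (by omega)⟩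
  · exact (C.not_four j (by omega) (by omega) (by omega) (by omega) key (by omega) (by omega)).elim

/-- In a pattern of period 5, a column of defect 1 cannot be followed by four columns without
defect: both patterns on these four columns force defect 2 in the remaining one. -/
theorem period_five_aux (hV : ∀ j, C.V (j + 5) = C.V j) (hU : ∀ j, C.U (j + 5) = C.U j) (j : ℤ)
    (h0 : C.defect j = 1) (h1 : C.defect (j + 1) = 0) (h2 : C.defect (j + 2) = 0)
    (h3 : C.defect (j + 3) = 0) (h4 : C.defect (j + 4) = 0) : False := by
  have q := C.four (j + 1) h1 (by convert h2 using 2; ring) (by convert h3 using 2; ring)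
    (by convert h4 using 2; ring)
  have b := C.defect_one _ h0
  have p1 := C.perfect _ h1
  have p2 := C.perfect _ h2
  have p3 := C.perfect _ h3
  have p4 := C.perfect _ h4
  have x0 := hV (j - 1)
  have x1 := hU (j - 2)
  have x2 := hU (j - 1)
  have x3 := hV j
  have x4 := hU j
  have x5 := hU (j + 1)
  have f0 := C.facts j
  simp only [dV, dU] at b
  clear hV hU h0 h1 h2 h3 h4
  ring_nf at *
  rcases q with q | q <;> omega

theorem defect_periodic {n : ℤ} (hV : ∀ j, C.V (j + n) = C.V j) (hU : ∀ j, C.U (j + n) = C.U j)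
    (j : ℤ) : C.defect (j + n) = C.defect j := by
  have e1 : j + n - 1 = j - 1 + n := by ring
  have e2 : j + n + 1 = j + 1 + n := by ring
  have e3 : j + n - 2 = j - 2 + n := by ring
  have e4 : j + n + 2 = j + 2 + n := by ring
  simp only [defect, dV, dU, e1, e2, e3, e4, hV, hU]

theorem period_five (hV : ∀ j, C.V (j + 5) = C.V j) (hU : ∀ j, C.U (j + 5) = C.U j) (j : ℤ) :
    1 < C.defect j + C.defect (j + 1) + C.defect (j + 2) + C.defect (j + 3) + C.defect (j + 4) := by
  by_contra h
  have w := C.five j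
  have d := C.defect_periodic hV hU
  have d0 := d j
  have d1 := d (j + 1)
  have d2 := d (j + 2)
  have d3 := d (j + 3)
  have A := C.period_five_aux hV hU
  have a0 := A j
  have a1 := A (j + 1)
  have a2 := A (j + 2)
  have a3 := A (j + 3)
  have a4 := A (j + 4)
  clear A d hV hU
  ring_nf at *
  -- The unique defective column is one of `j, …, j + 4`.
  obtain e | e | e | e | e : C.defect j = 1 ∨ C.defect (1 + j) = 1 ∨ C.defect (2 + j) = 1 ∨
      C.defect (3 + j) = 1 ∨ C.defect (4 + j) = 1 := by
    clear a0 a1 a2 a3 a4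
    omega
  · exact a0 e (by omega) (by omega) (by omega) (by omega)
  · exact a1 e (by omega) (by omega) (by omega) (by omega)
  · exact a2 e (by omega) (by omega) (by omega) (by omega)
  · exact a3 e (by omega) (by omega) (by omega) (by omega)
  · exact a4 e (by omega) (by omega) (by omega) (by omega)

/-- In a pattern of period 6, the five columns other than a given one are consecutive up to
translation by 6, hence contain a defect by `Strip.five`. -/
theorem period_six (hV : ∀ j, C.V (j + 6) = C.V j) (hU : ∀ j, C.U (j + 6) = C.U j) (j : ℤ) :
    1 < C.defect j + C.defect (j + 1) + C.defect (j + 2) + C.defect (j + 3) + C.defect (j + 4) +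
      C.defect (j + 5) := by
  have d := C.defect_periodic hV hU
  have d0 := d j
  have d1 := d (j + 1)
  have d2 := d (j + 2)
  have d3 := d (j + 3)
  have w0 := C.five j
  have w1 := C.five (j + 1)
  have w2 := C.five (j + 2)
  have w3 := C.five (j + 3)
  have w4 := C.five (j + 4)
  have w5 := C.five (j + 5)
  have d4 := d (j + 4)
  clear d hV hU
  ring_nf at *
  omega

end Strip


/-! ### Minimality of the Roman domination function -/

theorem weight_le_of_isRDF {V : Type*} {G : SimpleGraph V} {f f' : V → ℕ}
    (hf : IsGammaRFun G f) (hf' : IsRDF G f') : weight f ≤ weight f' := by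
  rw [hf.2]
  exact Nat.sInf_le ⟨f', hf', rfl⟩

/-- A vertex of weight 1 next to a vertex of weight 2 could be lowered to 0. -/
theorem not_adj_two_one {V : Type*} [Finite V] {G : SimpleGraph V} {f : V → ℕ}
    (hf : IsGammaRFun G f) {x y : V} (hxy : G.Adj x y) (hx : f x = 2) : f y ≠ 1 := by
  classical
  intro hy
  have := Fintype.ofFinite V
  have key : IsRDF G (Function.update f y 0) := by
    refine ⟨fun v => ?_, fun v hv => ?_⟩
    · by_cases h : v = y
      · simp [h]
      · simpa [h] using hf.1.1 v
    · by_cases h : v = y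
      · subst h
        exact ⟨x, hxy.symm, by simpa [hxy.ne] using hx⟩
      · rw [Function.update_of_ne h] at hv
        obtain ⟨u, hu, hu2⟩ := hf.1.2 v hv
        refine ⟨u, hu, ?_⟩
        rw [Function.update_of_ne (by rintro rfl; omega)]
        exact hu2
  have h1 := weight_le_of_isRDF hf key
  rw [weight, weight, finsum_eq_sum_of_fintype, finsum_eq_sum_of_fintype] at h1
  refine absurd h1 (not_le.2 (Finset.sum_lt_sum (fun v _ => ?_) ⟨y, Finset.mem_univ _, by simp [hy]⟩))
  by_cases h : v = y <;> simp [h]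

/-- If the adjacent vertices `x` and `y` both had weight 2 and `x` has at most two further neighbours
`a`, `b`, then lowering `x` to 0 and raising to 1 those neighbours of weight 0 gives a Roman
domination function of no larger weight with fewer vertices of weight 2. -/
theorem not_adj_two_two {V : Type*} [Finite V] {G : SimpleGraph V} {f : V → ℕ}
    (hf : IsGammaRFun G f)
    (hmin : ∀ f' : V → ℕ, IsGammaRFun G f' → {v | f v = 2}.ncard ≤ {v | f' v = 2}.ncard)
    {x y a b : V} (hxy : G.Adj x y) (hN : ∀ z, G.Adj x z → z = y ∨ z = a ∨ z = b)
    (hx : f x = 2) : f y ≠ 2 := by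
  classical
  intro hy
  have := Fintype.ofFinite V
  set f' : V → ℕ := fun w => if w = x then 0 else if G.Adj x w ∧ f w = 0 then 1 else f w
    with hf'
  have key : IsRDF G f' := by
    refine ⟨fun v => ?_, fun v hv => ?_⟩
    · have := hf.1.1 v
      simp only [hf']
      split_ifs <;> omega
    · by_cases h : v = x
      · subst h
        exact ⟨y, hxy, by simp [hf', hxy.ne', hy]⟩
      · simp only [hf', h, if_false] at hv
        split_ifs at hv with h1
        obtain ⟨u, hu, hu2⟩ := hf.1.2 v hv
        have hux : u ≠ x := by
          rintro rfl
          exact h1 ⟨hu.symm, hv⟩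
        exact ⟨u, hu, by simp [hf', hux, hu2]⟩
  have hle : weight f' ≤ weight f := by
    have hpt : ∀ w, f' w + (if w = x then 2 else 0) ≤
        f w + (if w = a then 1 else 0) + (if w = b then 1 else 0) := by
      intro w
      by_cases hw : w = x
      · subst hw
        simp [hf', hx]
        omega
      · simp only [hf', hw, if_false]
        split_ifs with h1 h2 h3 h4 <;> try omega
        rcases hN w h1.1 with rfl | h | h
        · omega
        · exact absurd h h2
        · exact absurd h h4
    have hs := Finset.sum_le_sum fun w (_ : w ∈ (Finset.univ : Finset V)) => hpt w
    simp only [Finset.sum_add_distrib, Finset.sum_ite_eq', Finset.mem_univ, if_true] at hs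
    rw [weight, weight, finsum_eq_sum_of_fintype, finsum_eq_sum_of_fintype]
    omega
  have hg : IsGammaRFun G f' :=
    ⟨key, by rw [← hf.2]; exact le_antisymm hle (weight_le_of_isRDF hf key)⟩
  refine absurd (hmin f' hg) (not_le.2 (Set.ncard_lt_ncard ?_ (Set.toFinite _)))
  refine ⟨fun w hw => ?_, fun hsub => ?_⟩
  · simp only [Set.mem_ofPred_eq, hf'] at hw ⊢
    split_ifs at hw <;> omega
  · have := hsub (show x ∈ {v | f v = 2} from hx)
    simp [hf'] at this

/-! ### Adjacency in `P(n,2)` -/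

theorem intCast_ne {n : ℕ} {a b : ℤ} (hab : a < b) (h : b < a + n) :
    (a : ZMod n) ≠ (b : ZMod n) := by
  intro he
  rw [ZMod.intCast_eq_intCast_iff_dvd_sub] at he
  exact absurd (Int.le_of_dvd (by omega) he) (by omega)

theorem petersen_adj_inl {n : ℕ} (hn : 5 ≤ n) (j : ℤ) (z : ZMod n ⊕ ZMod n) :
    (petersen n 2).Adj (Sum.inl (j : ZMod n)) z ↔
      z = Sum.inl ((j - 1 : ℤ) : ZMod n) ∨ z = Sum.inl ((j + 1 : ℤ) : ZMod n) ∨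
        z = Sum.inr (j : ZMod n) := by
  have h1 : (j : ZMod n) ≠ ((j + 1 : ℤ) : ZMod n) := intCast_ne (by omega) (by omega)
  have h2 : ((j - 1 : ℤ) : ZMod n) ≠ (j : ZMod n) := intCast_ne (by omega) (by omega)
  push_cast at h1 h2
  rcases z with z | z
  · simp only [petersen, SimpleGraph.fromRel_adj]
    push_cast
    simp only [ne_eq, Sum.inl.injEq, or_false]
    constructor
    · rintro ⟨-, h | h⟩
      · exact Or.inr h
      · left; rw [h]; ring
    · rintro (rfl | rfl)
      · exact ⟨h2.symm, Or.inr (by ring)⟩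
      · exact ⟨h1, Or.inl rfl⟩
  · simp [petersen, SimpleGraph.fromRel_adj]

theorem petersen_adj_inr {n : ℕ} (hn : 5 ≤ n) (j : ℤ) (z : ZMod n ⊕ ZMod n) :
    (petersen n 2).Adj (Sum.inr (j : ZMod n)) z ↔
      z = Sum.inr ((j - 2 : ℤ) : ZMod n) ∨ z = Sum.inr ((j + 2 : ℤ) : ZMod n) ∨
        z = Sum.inl (j : ZMod n) := by
  have h1 : (j : ZMod n) ≠ ((j + 2 : ℤ) : ZMod n) := intCast_ne (by omega) (by omega)
  have h2 : ((j - 2 : ℤ) : ZMod n) ≠ (j : ZMod n) := intCast_ne (by omega) (by omega)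
  push_cast at h1 h2
  rcases z with z | z
  · simp [petersen, SimpleGraph.fromRel_adj, eq_comm]
  · simp only [petersen, SimpleGraph.fromRel_adj]
    push_cast
    simp only [ne_eq, Sum.inr.injEq, or_false]
    constructor
    · rintro ⟨-, h | h⟩
      · exact Or.inr h
      · left; rw [h]; ring
    · rintro (rfl | rfl)
      · exact ⟨h2.symm, Or.inr (by ring)⟩
      · exact ⟨h1, Or.inl rfl⟩

/-- All neighbours of a vertex of weight 2 have weight 0. -/
theorem eq_zero_of_adj_two {n : ℕ} (hn : 5 ≤ n) {f : ZMod n ⊕ ZMod n → ℕ}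
    (hf : IsGammaRFun (petersen n 2) f) (hmin : MinV2 n f) {x y : ZMod n ⊕ ZMod n}
    (hxy : (petersen n 2).Adj x y) (hx : f x = 2) : f y = 0 := by
  have : NeZero n := ⟨by omega⟩
  have h1 := not_adj_two_one hf hxy hx
  have h2 : f y ≠ 2 := by
    rcases x with x | x
    · obtain ⟨j, rfl⟩ := ZMod.intCast_surjective x
      have hN := fun z => (petersen_adj_inl hn j z).1
      rcases hN y hxy with h | h | h <;> rw [← h] at hN
      · exact not_adj_two_two hf hmin hxy hN hx
      · exact not_adj_two_two hf hmin hxy (fun z hz => or_left_comm.1 (hN z hz)) hx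
      · exact not_adj_two_two hf hmin hxy (fun z hz => or_rotate.1 (or_rotate.1 (hN z hz))) hx
    · obtain ⟨j, rfl⟩ := ZMod.intCast_surjective x
      have hN := fun z => (petersen_adj_inr hn j z).1
      rcases hN y hxy with h | h | h <;> rw [← h] at hN
      · exact not_adj_two_two hf hmin hxy hN hx
      · exact not_adj_two_two hf hmin hxy (fun z hz => or_left_comm.1 (hN z hz)) hx
      · exact not_adj_two_two hf hmin hxy (fun z hz => or_rotate.1 (or_rotate.1 (hN z hz))) hx
  have h3 := hf.1.1 y
  omega

/-! ### Passing from `f` to the strip -/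

/-- The vertices of weight 2, lifted along `ℤ → ZMod n`. -/
def toStrip {n : ℕ} (hn : 5 ≤ n) {f : ZMod n ⊕ ZMod n → ℕ}
    (hf : IsGammaRFun (petersen n 2) f) (hmin : MinV2 n f) : Strip where
  V j := if f (Sum.inl (j : ZMod n)) = 2 then 1 else 0
  U j := if f (Sum.inr (j : ZMod n)) = 2 then 1 else 0
  hV j := by split_ifs <;> simp
  hU j := by split_ifs <;> simp
  hVV j := by
    have h := eq_zero_of_adj_two hn hf hmin ((petersen_adj_inl hn j _).2 (Or.inr (Or.inl rfl)))
    split_ifs <;> omega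
  hVU j := by
    have h := eq_zero_of_adj_two hn hf hmin ((petersen_adj_inl hn j _).2 (Or.inr (Or.inr rfl)))
    split_ifs <;> omega
  hUU j := by
    have h := eq_zero_of_adj_two hn hf hmin ((petersen_adj_inr hn j _).2 (Or.inr (Or.inl rfl)))
    split_ifs <;> omega

theorem ncard_three {α : Type*} (f : α → ℕ) {a b c : α} (hab : a ≠ b) (hac : a ≠ c)
    (hbc : b ≠ c) :
    (({a, b, c} : Set α) ∩ {u | f u = 2}).ncard =
      (if f a = 2 then 1 else 0) + (if f b = 2 then 1 else 0) + (if f c = 2 then 1 else 0) := by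
  classical
  have h : ({a, b, c} : Set α) ∩ {u | f u = 2} =
      ((({a, b, c} : Finset α).filter fun u => f u = 2 : Finset α) : Set α) := by
    ext u
    simp
  rw [h, Set.ncard_coe_finset, Finset.card_filter, Finset.sum_insert (by simp [hab, hac]),
    Finset.sum_insert (by simp [hbc]), Finset.sum_singleton, add_assoc]

section Bridge

variable {n : ℕ} (hn : 5 ≤ n) {f : ZMod n ⊕ ZMod n → ℕ}
  (hf : IsGammaRFun (petersen n 2) f) (hmin : MinV2 n f)

theorem f_inl (j : ℤ) : f (Sum.inl (j : ZMod n)) =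
    if (toStrip hn hf hmin).V j = 1 then 2 else
      if (toStrip hn hf hmin).dV j = 0 then 1 else 0 := by
  have hN := petersen_adj_inl hn j
  have h2 := hf.1.1 (Sum.inl (j : ZMod n))
  have hz := fun z hz => eq_zero_of_adj_two hn hf hmin (x := z) (y := Sum.inl (j : ZMod n))
    ((hN z).2 hz).symm
  have z1 := hz _ (Or.inl rfl)
  have z2 := hz _ (Or.inr (Or.inl rfl))
  have z3 := hz _ (Or.inr (Or.inr rfl))
  have hd : f (Sum.inl (j : ZMod n)) = 0 → f (Sum.inl ((j - 1 : ℤ) : ZMod n)) = 2 ∨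
      f (Sum.inl ((j + 1 : ℤ) : ZMod n)) = 2 ∨ f (Sum.inr (j : ZMod n)) = 2 := by
    intro h0
    obtain ⟨u, hu, hu2⟩ := hf.1.2 _ h0
    rcases (hN u).1 hu with rfl | rfl | rfl
    · exact Or.inl hu2
    · exact Or.inr (Or.inl hu2)
    · exact Or.inr (Or.inr hu2)
  simp only [Strip.dV, toStrip]
  split_ifs <;> omega

theorem f_inr (j : ℤ) : f (Sum.inr (j : ZMod n)) =
    if (toStrip hn hf hmin).U j = 1 then 2 else
      if (toStrip hn hf hmin).dU j = 0 then 1 else 0 := by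
  have hN := petersen_adj_inr hn j
  have h2 := hf.1.1 (Sum.inr (j : ZMod n))
  have hz := fun z hz => eq_zero_of_adj_two hn hf hmin (x := z) (y := Sum.inr (j : ZMod n))
    ((hN z).2 hz).symm
  have z1 := hz _ (Or.inl rfl)
  have z2 := hz _ (Or.inr (Or.inl rfl))
  have z3 := hz _ (Or.inr (Or.inr rfl))
  have hd : f (Sum.inr (j : ZMod n)) = 0 → f (Sum.inr ((j - 2 : ℤ) : ZMod n)) = 2 ∨
      f (Sum.inr ((j + 2 : ℤ) : ZMod n)) = 2 ∨ f (Sum.inl (j : ZMod n)) = 2 := by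
    intro h0
    obtain ⟨u, hu, hu2⟩ := hf.1.2 _ h0
    rcases (hN u).1 hu with rfl | rfl | rfl
    · exact Or.inl hu2
    · exact Or.inr (Or.inl hu2)
    · exact Or.inr (Or.inr hu2)
  simp only [Strip.dU, toStrip]
  split_ifs <;> omega

/-- Each vertex contributes half its deviation from exact domination to `r_f`. -/
theorem gf_inl (j : ℤ) : gf n f (Sum.inl (j : ZMod n)) - 1 / 2 =
    1 / 2 * (((toStrip hn hf hmin).dV j - 1).natAbs : ℚ) := by
  have hS : (petersen n 2).neighborSet (Sum.inl (j : ZMod n)) =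
      {Sum.inl ((j - 1 : ℤ) : ZMod n), Sum.inl ((j + 1 : ℤ) : ZMod n), Sum.inr (j : ZMod n)} := by
    ext z
    simp only [SimpleGraph.mem_neighborSet, petersen_adj_inl hn j z, Set.mem_insert_iff,
      Set.mem_singleton_iff]
  have hne : (Sum.inl ((j - 1 : ℤ) : ZMod n) : ZMod n ⊕ ZMod n) ≠
      Sum.inl ((j + 1 : ℤ) : ZMod n) :=
    fun h => intCast_ne (by omega) (by omega) (Sum.inl_injective h)
  have hc := ncard_three f hne (c := Sum.inr (j : ZMod n)) (by simp) (by simp)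
  have hv := f_inl hn hf hmin j
  have hF := (toStrip hn hf hmin).facts j
  have hF' := (toStrip hn hf hmin).facts (j - 1)
  have hD : (toStrip hn hf hmin).dV j = (toStrip hn hf hmin).V j +
    (((petersen n 2).neighborSet (Sum.inl (j : ZMod n))) ∩ {u | f u = 2}).ncard := by
    rw [hS, hc]
    simp only [Strip.dV, toStrip]
    push_cast
    ring
  have hdV : (toStrip hn hf hmin).dV j = (toStrip hn hf hmin).V j +
    (toStrip hn hf hmin).V (j - 1) + (toStrip hn hf hmin).V (j + 1) +
    (toStrip hn hf hmin).U j := rfl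
  rw [sub_add_cancel] at hF'
  unfold gf
  generalize (((petersen n 2).neighborSet (Sum.inl (j : ZMod n))) ∩ {u | f u = 2}).ncard = m at *
  split_ifs at hv with h1 h2
  · have : (toStrip hn hf hmin).dV j = 1 := by omega
    simp [hv, this]
  · simp [hv, h2]
    norm_num
  · have h3 : ((toStrip hn hf hmin).dV j - 1).natAbs + 1 = m := by omega
    rw [← h3]
    simp [hv]
    ring

theorem gf_inr (j : ℤ) : gf n f (Sum.inr (j : ZMod n)) - 1 / 2 =
    1 / 2 * (((toStrip hn hf hmin).dU j - 1).natAbs : ℚ) := by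
  have hS : (petersen n 2).neighborSet (Sum.inr (j : ZMod n)) =
      {Sum.inr ((j - 2 : ℤ) : ZMod n), Sum.inr ((j + 2 : ℤ) : ZMod n), Sum.inl (j : ZMod n)} := by
    ext z
    simp only [SimpleGraph.mem_neighborSet, petersen_adj_inr hn j z, Set.mem_insert_iff,
      Set.mem_singleton_iff]
  have hne : (Sum.inr ((j - 2 : ℤ) : ZMod n) : ZMod n ⊕ ZMod n) ≠
      Sum.inr ((j + 2 : ℤ) : ZMod n) :=
    fun h => intCast_ne (by omega) (by omega) (Sum.inr_injective h)
  have hc := ncard_three f hne (c := Sum.inl (j : ZMod n)) (by simp) (by simp)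
  have hv := f_inr hn hf hmin j
  have hF := (toStrip hn hf hmin).facts j
  have hF' := (toStrip hn hf hmin).facts (j - 2)
  have hF2 := (toStrip hn hf hmin).facts (j + 2)
  have hD : (toStrip hn hf hmin).dU j = (toStrip hn hf hmin).U j +
    (((petersen n 2).neighborSet (Sum.inr (j : ZMod n))) ∩ {u | f u = 2}).ncard := by
    rw [hS, hc]
    simp only [Strip.dU, toStrip]
    push_cast
    ring
  have hdU : (toStrip hn hf hmin).dU j = (toStrip hn hf hmin).U j +
    (toStrip hn hf hmin).U (j - 2) + (toStrip hn hf hmin).U (j + 2) +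
    (toStrip hn hf hmin).V j := rfl
  rw [sub_add_cancel] at hF'
  unfold gf
  generalize (((petersen n 2).neighborSet (Sum.inr (j : ZMod n))) ∩ {u | f u = 2}).ncard = m at *
  split_ifs at hv with h1 h2
  · have : (toStrip hn hf hmin).dU j = 1 := by omega
    simp [hv, this]
  · simp [hv, h2]
    norm_num
  · have h3 : ((toStrip hn hf hmin).dU j - 1).natAbs + 1 = m := by omega
    rw [← h3]
    simp [hv]
    ring

/-- For `n < 7` the block wraps around and its distinct columns are `i, …, i + n - 1`. -/
theorem rfSum_eq (i : ℤ) : rfSum n f (Vblock n i 7) =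
    1 / 2 * ((∑ k ∈ Finset.range (min n 7), (toStrip hn hf hmin).defect (i + k) : ℕ) : ℚ) := by
  classical
  set m := min n 7 with hm
  have hmn : m ≤ n := min_le_left _ _
  have hm7 : m ≤ 7 := min_le_right _ _
  have hinj : ∀ a ∈ Finset.range m, ∀ b ∈ Finset.range m,
      ((i + a : ℤ) : ZMod n) = ((i + b : ℤ) : ZMod n) → a = b := by
    intro a ha b hb hab
    rw [Finset.mem_range] at ha hb
    rcases lt_trichotomy a b with h | h | h
    · exact absurd hab (intCast_ne (by omega) (by omega))
    · exact h
    · exact absurd hab.symm (intCast_ne (by omega) (by omega))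
  have hB : Vblock n i 7 =
      (((Finset.range m).image fun k : ℕ => (Sum.inl ((i + k : ℤ) : ZMod n) : ZMod n ⊕ ZMod n)) ∪
        ((Finset.range m).image fun k : ℕ => (Sum.inr ((i + k : ℤ) : ZMod n) : ZMod n ⊕ ZMod n)) :
          Finset (ZMod n ⊕ ZMod n)) := by
    ext w
    simp only [Vblock, Set.mem_ofPred_eq, Finset.coe_union, Finset.coe_image, Set.mem_union,
      Set.mem_image, Finset.coe_range, Set.mem_Iio]
    constructor
    · rintro ⟨j, h1, h2, h⟩
      obtain ⟨k, hk, hjk⟩ : ∃ k : ℕ, k < m ∧ ((i + k : ℤ) : ZMod n) = (j : ZMod n) := by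
        by_cases hj : j - i < m
        · refine ⟨(j - i).toNat, by omega, ?_⟩
          congr 1
          omega
        · refine ⟨(j - i - n).toNat, by omega, ?_⟩
          have : (i + ((j - i - n).toNat : ℤ)) = j - n := by omega
          rw [this]
          simp
      rcases h with rfl | rfl
      · exact Or.inl ⟨k, hk, by rw [hjk]⟩
      · exact Or.inr ⟨k, hk, by rw [hjk]⟩
    · rintro (⟨k, hk, rfl⟩ | ⟨k, hk, rfl⟩)
      · exact ⟨i + k, by omega, by push_cast; omega, Or.inl rfl⟩
      · exact ⟨i + k, by omega, by push_cast; omega, Or.inr rfl⟩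
  rw [rfSum, hB, finsum_mem_coe_finset, Finset.sum_union, Finset.sum_image, Finset.sum_image,
    ← Finset.sum_add_distrib, Nat.cast_sum, Finset.mul_sum]
  · refine Finset.sum_congr rfl fun k _ => ?_
    rw [gf_inl hn hf hmin, gf_inr hn hf hmin, Strip.defect]
    push_cast
    ring
  · exact fun a ha b hb h => hinj a ha b hb (Sum.inr_injective h)
  · exact fun a ha b hb h => hinj a ha b hb (Sum.inl_injective h)
  · rw [Finset.disjoint_left]
    intro w h1 h2
    obtain ⟨a, -, rfl⟩ := Finset.mem_image.1 h1
    obtain ⟨b, -, h⟩ := Finset.mem_image.1 h2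
    cases h

end Bridge

/-- If `x` and `T` carry weights 1 and 2 and the rest of `B` weight 0, the level sets of `f` in `B`
are as expected. -/
theorem level_sets {α : Type*} {f : α → ℕ} {B T : Set α} {x : α} (hx : x ∈ B) (hfx : f x = 1)
    (hT : ∀ w ∈ T, w ∈ B ∧ f w = 2) (h0 : ∀ w ∈ B, w = x ∨ w ∈ T ∨ f w = 0) :
    B ∩ {w | f w = 1} = {x} ∧ B ∩ {w | f w = 2} = T ∧ B ∩ {w | f w = 0} = B \ insert x T := by
  refine ⟨?_, ?_, ?_⟩ <;> ext w <;>
    simp only [Set.mem_inter_iff, Set.mem_ofPred_eq, Set.mem_singleton_iff, Set.mem_sdiff,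
      Set.mem_insert_iff] <;> grind

/-- If `r_f(V'(i,7)) ≤ 1/2`, then (1) `r_f(V'(i,7)) ≥ 1/2`;
(2) `V'(i,7) ∩ V₁ = {v_{i+3}}`; and (3) either
`V'(i,7) ∩ V₂ = {u_{i+1}, u_{i+2}, v_{i+5}}` with
`V'(i,7) ∩ V₀ = V'(i,7) \ {v_{i+3}, u_{i+1}, u_{i+2}, v_{i+5}}`, or
`V'(i,7) ∩ V₂ = {u_{i+4}, u_{i+5}, v_{i+1}}` with
`V'(i,7) ∩ V₀ = V'(i,7) \ {v_{i+3}, u_{i+4}, u_{i+5}, v_{i+1}}`. -/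
theorem structure_of_low_weight_block (n : ℕ) (hn : 5 ≤ n)
    (f : ZMod n ⊕ ZMod n → ℕ) (hf : IsGammaRFun (petersen n 2) f)
    (hmin : MinV2 n f) (i : ℤ)
    (h : rfSum n f (Vblock n i 7) ≤ 1/2) :
    1/2 ≤ rfSum n f (Vblock n i 7) ∧
    Vblock n i 7 ∩ {w | f w = 1} = {Sum.inl ((i + 3 : ℤ) : ZMod n)} ∧
    ((Vblock n i 7 ∩ {w | f w = 2} =
        {Sum.inr ((i + 1 : ℤ) : ZMod n), Sum.inr ((i + 2 : ℤ) : ZMod n),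
          Sum.inl ((i + 5 : ℤ) : ZMod n)} ∧
      Vblock n i 7 ∩ {w | f w = 0} =
        Vblock n i 7 \ {Sum.inl ((i + 3 : ℤ) : ZMod n),
          Sum.inr ((i + 1 : ℤ) : ZMod n), Sum.inr ((i + 2 : ℤ) : ZMod n),
          Sum.inl ((i + 5 : ℤ) : ZMod n)}) ∨
     (Vblock n i 7 ∩ {w | f w = 2} =
        {Sum.inr ((i + 4 : ℤ) : ZMod n), Sum.inr ((i + 5 : ℤ) : ZMod n),
          Sum.inl ((i + 1 : ℤ) : ZMod n)} ∧
      Vblock n i 7 ∩ {w | f w = 0} =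
        Vblock n i 7 \ {Sum.inl ((i + 3 : ℤ) : ZMod n),
          Sum.inr ((i + 4 : ℤ) : ZMod n), Sum.inr ((i + 5 : ℤ) : ZMod n),
          Sum.inl ((i + 1 : ℤ) : ZMod n)})) := by
  set C := toStrip hn hf hmin with hC
  have hr := rfSum_eq hn hf hmin i
  rw [← hC] at hr
  have hle : ∑ k ∈ Finset.range (min n 7), C.defect (i + k) ≤ 1 := by
    rw [hr] at h
    have : ((∑ k ∈ Finset.range (min n 7), C.defect (i + k) : ℕ) : ℚ) ≤ 1 := by linarith
    exact_mod_cast this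
  have hperV : ∀ j, C.V (j + n) = C.V j := fun j => by simp [hC, toStrip]
  have hperU : ∀ j, C.U (j + n) = C.U j := fun j => by simp [hC, toStrip]
  obtain rfl | rfl | h7 : n = 5 ∨ n = 6 ∨ 7 ≤ n := by omega
  · have := C.period_five hperV hperU i
    norm_num [Finset.sum_range_succ] at hle
    omega
  · have := C.period_six hperV hperU i
    norm_num [Finset.sum_range_succ] at hle
    omega
  rw [min_eq_right h7] at hr hle
  simp only [Finset.sum_range_succ, Finset.sum_range_zero, zero_add, Nat.cast_zero, add_zero,
    Nat.cast_one, Nat.cast_ofNat] at hr hle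
  obtain ⟨⟨d0, d1, d2, d3, d4, d5, d6⟩, hd, hpat⟩ := C.seven i hle
  have hmem : ∀ k : ℤ, 0 ≤ k → k < 7 → Sum.inl ((i + k : ℤ) : ZMod n) ∈ Vblock n i 7 ∧
      Sum.inr ((i + k : ℤ) : ZMod n) ∈ Vblock n i 7 := fun k h1 h2 =>
    ⟨⟨i + k, by omega, by push_cast; omega, Or.inl rfl⟩,
      ⟨i + k, by omega, by push_cast; omega, Or.inr rfl⟩⟩
  have hVf := f_inl hn hf hmin
  have hUf := f_inr hn hf hmin
  rw [← hC] at hVf hUf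
  -- all vertices of the block other than `v_{i+3}` are dominated exactly once
  have hone : ∀ k : ℤ, 0 ≤ k → k < 7 → (k ≠ 3 → C.dV (i + k) = 1) ∧ C.dU (i + k) = 1 := by
    intro k h1 h2
    unfold Strip.defect at d0 d1 d2 d3 d4 d5 d6
    obtain rfl | rfl | rfl | rfl | rfl | rfl | rfl :
      k = 0 ∨ k = 1 ∨ k = 2 ∨ k = 3 ∨ k = 4 ∨ k = 5 ∨ k = 6 := by omega
    all_goals
      try rw [add_zero]
      omega
  have hx : f (Sum.inl ((i + 3 : ℤ) : ZMod n)) = 1 := by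
    have hF : C.V (i + 3) = 0 := by rcases hpat with hpat | hpat <;> omega
    rw [hVf, hF, hd]
    simp
  have hcols : ∀ w ∈ Vblock n i 7, w = Sum.inl ((i + 3 : ℤ) : ZMod n) ∨
      ∃ k : ℤ, 0 ≤ k ∧ k < 7 ∧
        ((w = Sum.inl ((i + k : ℤ) : ZMod n) ∧ (C.V (i + k) = 1 ∨ f w = 0)) ∨
        (w = Sum.inr ((i + k : ℤ) : ZMod n) ∧ (C.U (i + k) = 1 ∨ f w = 0))) := by
    rintro w ⟨j, h1, h2, hw⟩
    obtain ⟨k, rfl⟩ : ∃ k, j = i + k := ⟨j - i, by ring⟩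
    push_cast at h2
    have hk := hone k (by omega) (by omega)
    rcases hw with rfl | rfl
    · by_cases h3 : k = 3
      · subst h3
        exact Or.inl rfl
      · refine Or.inr ⟨k, by omega, by omega, Or.inl ⟨rfl, ?_⟩⟩
        rw [hVf, hk.1 h3]
        by_cases hv : C.V (i + k) = 1 <;> simp [hv]
    · refine Or.inr ⟨k, by omega, by omega, Or.inr ⟨rfl, ?_⟩⟩
      rw [hUf, hk.2]
      by_cases hv : C.U (i + k) = 1 <;> simp [hv]
  have hx3 := (hmem 3 (by omega) (by omega)).1
  refine ⟨by rw [hr, d0, d1, d2, d3, d4, d5, d6]; norm_num, ?_⟩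
  rcases hpat with hpat | hpat
  · obtain ⟨A, B, D⟩ := level_sets (T := {Sum.inr ((i + 1 : ℤ) : ZMod n),
      Sum.inr ((i + 2 : ℤ) : ZMod n), Sum.inl ((i + 5 : ℤ) : ZMod n)}) hx3 hx (by
        rintro w (rfl | rfl | rfl)
        · exact ⟨(hmem 1 (by omega) (by omega)).2, by rw [hUf, if_pos (by omega)]⟩
        · exact ⟨(hmem 2 (by omega) (by omega)).2, by rw [hUf, if_pos (by omega)]⟩
        · exact ⟨(hmem 5 (by omega) (by omega)).1, by rw [hVf, if_pos (by omega)]⟩) (by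
        intro w hw
        obtain h3 | ⟨k, h1, h2, hk⟩ := hcols w hw
        · exact Or.inl h3
        · obtain rfl | rfl | rfl | rfl | rfl | rfl | rfl :
            k = 0 ∨ k = 1 ∨ k = 2 ∨ k = 3 ∨ k = 4 ∨ k = 5 ∨ k = 6 := by omega
          all_goals
            simp only [Set.mem_insert_iff, Set.mem_singleton_iff]
            try rw [add_zero] at hk
            grind)
    exact ⟨A, Or.inl ⟨B, D⟩⟩
  · obtain ⟨A, B, D⟩ := level_sets (T := {Sum.inr ((i + 4 : ℤ) : ZMod n),
      Sum.inr ((i + 5 : ℤ) : ZMod n), Sum.inl ((i + 1 : ℤ) : ZMod n)}) hx3 hx (by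
        rintro w (rfl | rfl | rfl)
        · exact ⟨(hmem 4 (by omega) (by omega)).2, by rw [hUf, if_pos (by omega)]⟩
        · exact ⟨(hmem 5 (by omega) (by omega)).2, by rw [hUf, if_pos (by omega)]⟩
        · exact ⟨(hmem 1 (by omega) (by omega)).1, by rw [hVf, if_pos (by omega)]⟩) (by
        intro w hw
        obtain h3 | ⟨k, h1, h2, hk⟩ := hcols w hw
        · exact Or.inl h3
        · obtain rfl | rfl | rfl | rfl | rfl | rfl | rfl :
            k = 0 ∨ k = 1 ∨ k = 2 ∨ k = 3 ∨ k = 4 ∨ k = 5 ∨ k = 6 := by omega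
          all_goals
            simp only [Set.mem_insert_iff, Set.mem_singleton_iff]
            try rw [add_zero] at hk
            grind)
    exact ⟨A, Or.inr ⟨B, D⟩⟩
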